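/- Let u(y,t) = ∫_{ℝⁿ} K(y,z,t) u₀(z) dz, where K is the Euclidean heat kernel on ℝⁿ and u₀ : ℝⁿ → ℝ is continuous, compactly supported, nonnegative, and not identically zero. Fix x₀ ∈ ℝⁿ and t₀ > 0, write τ = t₀ - t, and let Ĥ(y,t) = (4πτ)^{-n/2} exp(-‖x₀-y‖²/(4τ)) for 0 < t < t₀. Then the function t ↦ ∫_{ℝⁿ} t² u(y,t)( Δ log u(y,t) + n/(2t) ) Ĥ(y,t) dy is differentiable on (0,t₀), and its derivative equals 2t² ∫_{ℝⁿ} ‖ ∇² log u(y,t) + (1/(2t)) I ‖²_F u(y,t) Ĥ(y,t) dy, which is nonnegative; in particular the function is nondecreasing in t. -/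

import Mathlib

open Real MeasureTheory Filter Set

/-- The Euclidean heat kernel on ℝⁿ. -/
noncomputable def heatK (n : ℕ) (x y : EuclideanSpace ℝ (Fin n)) (t : ℝ) : ℝ :=
  (4 * π * t) ^ (-(n : ℝ) / 2) * Real.exp (-‖x - y‖ ^ 2 / (4 * t))

/-- `i`-th partial derivative of `f : ℝⁿ → ℝ`. -/
noncomputable def pdv {n : ℕ} (i : Fin n) (f : EuclideanSpace ℝ (Fin n) → ℝ)
    (y : EuclideanSpace ℝ (Fin n)) : ℝ :=
  fderiv ℝ f y (EuclideanSpace.single i 1)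

/-- `(i,j)` entry of the Hessian of `f : ℝⁿ → ℝ`. -/
noncomputable def hess {n : ℕ} (i j : Fin n) (f : EuclideanSpace ℝ (Fin n) → ℝ)
    (y : EuclideanSpace ℝ (Fin n)) : ℝ :=
  pdv i (pdv j f) y

/-- Euclidean Laplacian (trace of the Hessian) of `f : ℝⁿ → ℝ`. -/
noncomputable def lap {n : ℕ} (f : EuclideanSpace ℝ (Fin n) → ℝ)
    (y : EuclideanSpace ℝ (Fin n)) : ℝ :=
  ∑ i, hess i i f y

/-!
Let `u` be the heat flow of a compactly supported measure `μ`. For fixed `(y, t)` let `Z` have the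
law proportional to `K(y,z,t) μ(dz)`, and let `m` be its mean. Differentiating the Gaussian kernel
gives Tweedie's formula `∇ log u = (m - y) / (2t)`, hence `∇² log u + I / (2t) = ∇m / (2t)`, and
`∇m = Cov(Z) / (2t)`. Taking the trace, `t² u (Δ log u + n / (2t)) = V / 4`, where
`V = u tr Cov(Z) = ∑ i, (E[Z i ^ 2] u - m i ^ 2 u)`.

Here `u`, `m i u` and `E[Z i ^ 2] u` solve the heat equation, as heat flows of `μ`, `z i μ` and
`z i ^ 2 μ`. The carré du champ identity therefore gives `∂V/∂t = ΔV + 2u ‖∇m‖²`. When `V` is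
integrated against the backward heat kernel, Green's formula cancels `ΔV` and only
`2u ‖∇m‖² = 8t² u ‖∇² log u + I / (2t)‖²` is left.
-/

open scoped Topology ENNReal

local notation "𝔼" n:max => EuclideanSpace ℝ (Fin n)

section PartialDerivatives

variable {n : ℕ}

lemma pdv_const (j : Fin n) (c : ℝ) (y : 𝔼 n) : pdv j (fun _ => c) y = 0 := by
  simp [pdv]

lemma pdv_coord (i j : Fin n) (y : 𝔼 n) : pdv j (fun x => x i) y = if i = j then 1 else 0 := by
  have h : HasFDerivAt (fun x : 𝔼 n => x i) (EuclideanSpace.proj i : 𝔼 n →L[ℝ] ℝ) y :=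
    (EuclideanSpace.proj i : 𝔼 n →L[ℝ] ℝ).hasFDerivAt
  simp [pdv, h.fderiv]

variable {f g : 𝔼 n → ℝ} {y : 𝔼 n}

lemma pdv_add (j : Fin n) (hf : DifferentiableAt ℝ f y) (hg : DifferentiableAt ℝ g y) :
    pdv j (fun x => f x + g x) y = pdv j f y + pdv j g y := by
  simp [pdv, fderiv_fun_add hf hg]

lemma pdv_sub (j : Fin n) (hf : DifferentiableAt ℝ f y) (hg : DifferentiableAt ℝ g y) :
    pdv j (fun x => f x - g x) y = pdv j f y - pdv j g y := by
  simp [pdv, fderiv_fun_sub hf hg]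

lemma pdv_mul (j : Fin n) (hf : DifferentiableAt ℝ f y) (hg : DifferentiableAt ℝ g y) :
    pdv j (fun x => f x * g x) y = pdv j f y * g y + f y * pdv j g y := by
  simp [pdv, fderiv_fun_mul hf hg]
  ring

lemma pdv_const_mul (j : Fin n) (c : ℝ) (hf : DifferentiableAt ℝ f y) :
    pdv j (fun x => c * f x) y = c * pdv j f y := by
  simp [pdv_mul j (differentiableAt_const c) hf, pdv_const]

lemma pdv_log (j : Fin n) (hf : DifferentiableAt ℝ f y) (h₀ : f y ≠ 0) :
    pdv j (fun x => Real.log (f x)) y = pdv j f y / f y := by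
  simp [pdv, (hf.hasFDerivAt.log h₀).fderiv, div_eq_inv_mul]

lemma pdv_div (j : Fin n) (hf : DifferentiableAt ℝ f y) (hg : DifferentiableAt ℝ g y)
    (h₀ : g y ≠ 0) :
    pdv j (fun x => f x / g x) y = (pdv j f y - f y / g y * pdv j g y) / g y := by
  have hinv : HasFDerivAt (fun x => (g x)⁻¹) (-(g y ^ 2)⁻¹ • fderiv ℝ g y) y :=
    (hasDerivAt_inv h₀).comp_hasFDerivAt y hg.hasFDerivAt
  have hinv' : pdv j (fun x => (g x)⁻¹) y = -(g y ^ 2)⁻¹ * pdv j g y := by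
    simp [pdv, hinv.fderiv]
  simp only [div_eq_mul_inv]
  rw [pdv_mul j hf hinv.differentiableAt, hinv']
  field_simp
  ring

lemma pdv_sum {ι : Type*} (s : Finset ι) {f : ι → 𝔼 n → ℝ} (j : Fin n)
    (hf : ∀ i ∈ s, DifferentiableAt ℝ (f i) y) :
    pdv j (fun x => ∑ i ∈ s, f i x) y = ∑ i ∈ s, pdv j (f i) y := by
  simp [pdv, fderiv_fun_sum hf]

lemma lap_sub (hf : Differentiable ℝ f) (hf' : ∀ j, Differentiable ℝ (pdv j f))
    (hg : Differentiable ℝ g) (hg' : ∀ j, Differentiable ℝ (pdv j g)) :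
    lap (fun x => f x - g x) y = lap f y - lap g y := by
  have h (j : Fin n) : pdv j (fun x => f x - g x) = fun x => pdv j f x - pdv j g x :=
    funext fun x => pdv_sub j (hf x) (hg x)
  simp only [lap, hess, h, pdv_sub _ (hf' _ y) (hg' _ y), Finset.sum_sub_distrib]

lemma lap_sum {ι : Type*} (s : Finset ι) {f : ι → 𝔼 n → ℝ}
    (hf : ∀ i ∈ s, Differentiable ℝ (f i)) (hf' : ∀ i ∈ s, ∀ j, Differentiable ℝ (pdv j (f i))) :
    lap (fun x => ∑ i ∈ s, f i x) y = ∑ i ∈ s, lap (f i) y := by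
  have h (j : Fin n) : pdv j (fun x => ∑ i ∈ s, f i x) = fun x => ∑ i ∈ s, pdv j (f i) x :=
    funext fun x => pdv_sum s j fun i hi => hf i hi x
  simp only [lap, hess, h, pdv_sum s _ fun i hi => hf' i hi _ y]
  exact Finset.sum_comm

lemma lap_mul (hf : Differentiable ℝ f) (hf' : ∀ j, Differentiable ℝ (pdv j f))
    (hg : Differentiable ℝ g) (hg' : ∀ j, Differentiable ℝ (pdv j g)) :
    lap (fun x => f x * g x) y
      = lap f y * g y + 2 * ∑ j, pdv j f y * pdv j g y + f y * lap g y := by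
  have h (j : Fin n) :
      pdv j (fun x => f x * g x) = fun x => pdv j f x * g x + f x * pdv j g x :=
    funext fun x => pdv_mul j (hf x) (hg x)
  simp only [lap, hess, h, Finset.sum_mul, Finset.mul_sum, ← Finset.sum_add_distrib]
  refine Finset.sum_congr rfl fun j _ => ?_
  rw [pdv_add j ((hf' j y).fun_mul (hg y)) ((hf y).fun_mul (hg' j y)),
    pdv_mul j (hf' j y) (hg y), pdv_mul j (hf y) (hg' j y)]
  ring

-- The Laplacian of `h` itself has been eliminated: only `u` and `h * u` solve the heat equation.
lemma lap_sq_mul {h u : 𝔼 n → ℝ} (hh : Differentiable ℝ h) (hh' : ∀ j, Differentiable ℝ (pdv j h))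
    (hu : Differentiable ℝ u) (hu' : ∀ j, Differentiable ℝ (pdv j u)) :
    lap (fun x => h x ^ 2 * u x) y = 2 * h y * lap (fun x => h x * u x) y - h y ^ 2 * lap u y
      + 2 * u y * ∑ j, pdv j h y ^ 2 := by
  have hsq : Differentiable ℝ fun x => h x * h x := hh.mul hh
  have pdv_sq (j : Fin n) : pdv j (fun x => h x * h x) = fun x => 2 * (h x * pdv j h x) :=
    funext fun x => by rw [pdv_mul j (hh x) (hh x)]; ring
  have hsq' (j : Fin n) : Differentiable ℝ (pdv j fun x => h x * h x) := by
    rw [pdv_sq j]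
    exact (hh.mul (hh' j)).const_mul 2
  simp only [sq (h _)]
  rw [lap_mul hsq hsq' hu hu', lap_mul hh hh' hh hh', lap_mul hh hh' hu hu']
  simp only [pdv_sq, sq (pdv _ _ _), mul_assoc (2 : ℝ), mul_assoc (h y), ← Finset.mul_sum]
  ring

lemma integral_lap_mul
    (hf : Differentiable ℝ f) (hf' : ∀ j, Differentiable ℝ (pdv j f))
    (hg : Differentiable ℝ g) (hg' : ∀ j, Differentiable ℝ (pdv j g))
    (h₂₀ : ∀ j, Integrable fun x => pdv j (pdv j f) x * g x)
    (h₁₀ : ∀ j, Integrable fun x => pdv j f x * g x)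
    (h₁₁ : ∀ j, Integrable fun x => pdv j f x * pdv j g x)
    (h₀₁ : ∀ j, Integrable fun x => f x * pdv j g x)
    (h₀₂ : ∀ j, Integrable fun x => f x * pdv j (pdv j g) x) :
    ∫ x, lap f x * g x = ∫ x, f x * lap g x := by
  have hibp (j : Fin n) :
      ∫ x, pdv j (pdv j f) x * g x = ∫ x, f x * pdv j (pdv j g) x := by
    have e₁ : ∫ x, pdv j f x * pdv j g x = -∫ x, pdv j (pdv j f) x * g x :=
      integral_mul_fderiv_eq_neg_fderiv_mul_of_integrable (h₂₀ j) (h₁₁ j) (h₁₀ j)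
        (fun x _ => hf' j x) fun x _ => hg x
    have e₂ : ∫ x, f x * pdv j (pdv j g) x = -∫ x, pdv j f x * pdv j g x :=
      integral_mul_fderiv_eq_neg_fderiv_mul_of_integrable (h₁₁ j) (h₀₂ j) (h₀₁ j)
        (fun x _ => hf x) fun x _ => hg' j x
    rw [e₂, e₁, neg_neg]
  simp only [lap, hess, Finset.sum_mul, Finset.mul_sum]
  rw [integral_finsetSum _ fun j _ => h₂₀ j, integral_finsetSum _ fun j _ => h₀₂ j]
  exact Finset.sum_congr rfl fun j _ => hibp j

end PartialDerivatives

section HeatKernel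

variable {n : ℕ}

lemma heatK_comm (x y : 𝔼 n) (t : ℝ) : heatK n x y t = heatK n y x t := by
  simp only [heatK, norm_sub_rev x y]

lemma heatK_pos (x y : 𝔼 n) {t : ℝ} (ht : 0 < t) : 0 < heatK n x y t := by
  unfold heatK
  positivity

lemma heatK_le_mul_exp (x y : 𝔼 n) {α β t : ℝ} (hα : 0 < α) (h : t ∈ Icc α β) :
    heatK n x y t ≤ (4 * π * α) ^ (-(n : ℝ) / 2) * Real.exp (-‖x - y‖ ^ 2 / (4 * β)) := by
  have ht : 0 < t := hα.trans_le h.1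
  have hpow : (4 * π * t) ^ (-(n : ℝ) / 2) ≤ (4 * π * α) ^ (-(n : ℝ) / 2) :=
    Real.rpow_le_rpow_of_nonpos (by positivity) (by gcongr; exact h.1)
      (div_nonpos_of_nonpos_of_nonneg (by simp) zero_le_two)
  have hexp : -‖x - y‖ ^ 2 / (4 * t) ≤ -‖x - y‖ ^ 2 / (4 * β) := by
    rw [neg_div, neg_div]
    gcongr
    exact h.2
  exact mul_le_mul hpow (Real.exp_le_exp.2 hexp) (Real.exp_nonneg _) (by positivity)

lemma heatK_le (x y : 𝔼 n) {α t : ℝ} (hα : 0 < α) (ht : α ≤ t) :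
    heatK n x y t ≤ (4 * π * α) ^ (-(n : ℝ) / 2) := by
  refine (heatK_le_mul_exp x y hα ⟨ht, le_rfl⟩).trans (mul_le_of_le_one_right (by positivity) ?_)
  refine Real.exp_le_one_iff.2 (div_nonpos_of_nonpos_of_nonneg ?_ ?_)
  · simp
  · linarith

lemma continuousOn_heatK :
    ContinuousOn (fun p : (𝔼 n × 𝔼 n) × ℝ => heatK n p.1.1 p.1.2 p.2) (univ ×ˢ Ioi 0) := by
  have h (p : (𝔼 n × 𝔼 n) × ℝ) (hp : p ∈ univ ×ˢ Ioi (0 : ℝ)) : 0 < p.2 := hp.2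
  unfold heatK
  refine .mul (.rpow_const (by fun_prop) fun p hp => ?_)
    (Real.continuous_exp.comp_continuousOn (.div (by fun_prop) (by fun_prop) fun p hp => ?_))
  · exact .inl (by have := h p hp; positivity)
  · have := h p hp; positivity

@[fun_prop]
lemma continuous_heatK (t : ℝ) : Continuous fun p : 𝔼 n × 𝔼 n => heatK n p.1 p.2 t := by
  unfold heatK
  fun_prop

lemma hasFDerivAt_heatK (y z : 𝔼 n) (t : ℝ) :
    HasFDerivAt (fun x => heatK n x z t) ((heatK n y z t / (2 * t)) • innerSL ℝ (z - y)) y := by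
  have hnorm : HasFDerivAt (fun x => ‖x - z‖ ^ 2) (2 • innerSL ℝ (y - z)) y := by
    simpa using ((hasFDerivAt_id y).sub_const z).norm_sq
  have h := ((hnorm.const_mul (-(4 * t)⁻¹)).exp).const_mul ((4 * π * t) ^ (-(n : ℝ) / 2))
  have hfun : (fun x => heatK n x z t)
      = fun x => (4 * π * t) ^ (-(n : ℝ) / 2) * Real.exp (-(4 * t)⁻¹ * ‖x - z‖ ^ 2) := by
    funext x
    simp only [heatK, div_eq_inv_mul, mul_neg, neg_mul]
  rw [hfun]
  refine h.congr_fderiv (ContinuousLinearMap.ext fun v => ?_)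
  simp only [smul_apply, innerSL_apply_apply, smul_eq_mul, nsmul_eq_mul, heatK]
  rw [← neg_sub y z, inner_neg_left]
  simp only [neg_div, div_eq_inv_mul (‖y - z‖ ^ 2), neg_mul]
  ring

lemma differentiable_heatK (z : 𝔼 n) (t : ℝ) : Differentiable ℝ fun x => heatK n x z t :=
  fun y => (hasFDerivAt_heatK y z t).differentiableAt

lemma pdv_heatK (j : Fin n) (y z : 𝔼 n) (t : ℝ) :
    pdv j (fun x => heatK n x z t) y = (z j - y j) / (2 * t) * heatK n y z t := by
  rw [pdv, (hasFDerivAt_heatK y z t).fderiv]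
  simp [EuclideanSpace.inner_single_right]
  ring

lemma hess_heatK_self (j : Fin n) (y z : 𝔼 n) (t : ℝ) :
    hess j j (fun x => heatK n x z t) y
      = ((z j - y j) ^ 2 / (4 * t ^ 2) - 1 / (2 * t)) * heatK n y z t := by
  have hlin : DifferentiableAt ℝ (fun x : 𝔼 n => z j - x j) y := by fun_prop
  have hpdv : pdv j (fun x => heatK n x z t)
      = fun x => (2 * t)⁻¹ * ((z j - x j) * heatK n x z t) :=
    funext fun x => by rw [pdv_heatK]; ring
  rw [hess, hpdv, pdv_const_mul j _ (hlin.fun_mul (differentiable_heatK z t y)),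
    pdv_mul j hlin (differentiable_heatK z t y), pdv_sub j (by fun_prop) (by fun_prop),
    pdv_const, pdv_coord, pdv_heatK]
  simp only [if_true]
  ring

lemma lap_heatK (y z : 𝔼 n) (t : ℝ) :
    lap (fun x => heatK n x z t) y
      = (∑ j, ((z j - y j) ^ 2 / (4 * t ^ 2) - 1 / (2 * t))) * heatK n y z t := by
  simp only [lap, hess_heatK_self, ← Finset.sum_mul]

lemma hasDerivAt_heatK (y z : 𝔼 n) {t : ℝ} (ht : 0 < t) :
    HasDerivAt (fun s => heatK n y z s) (lap (fun x => heatK n x z t) y) t := by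
  have hpow : HasDerivAt (fun s : ℝ => (4 * π * s) ^ (-(n : ℝ) / 2))
      (4 * π * (-(n : ℝ) / 2) * (4 * π * t) ^ (-(n : ℝ) / 2 - 1)) t := by
    simpa using ((hasDerivAt_id t).const_mul (4 * π)).rpow_const (.inl (by positivity))
  have hexp : HasDerivAt (fun s : ℝ => Real.exp (-‖y - z‖ ^ 2 / (4 * s)))
      (Real.exp (-‖y - z‖ ^ 2 / (4 * t)) * (‖y - z‖ ^ 2 / (4 * t ^ 2))) t := by
    have h := (((hasDerivAt_inv ht.ne').const_mul (-‖y - z‖ ^ 2 / 4)).exp)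
    convert h using 1 <;> [funext s; skip] <;> field_simp
  refine (hpow.mul hexp).congr_deriv ?_
  have hlap : lap (fun x => heatK n x z t) y
      = (‖y - z‖ ^ 2 / (4 * t ^ 2) - n / (2 * t)) * heatK n y z t := by
    simp only [lap_heatK, Finset.sum_sub_distrib, ← Finset.sum_div, norm_sub_rev y z,
      EuclideanSpace.real_norm_sq_eq]
    simp
  rw [hlap, heatK, Real.rpow_sub_one (by positivity)]
  field_simp
  ring

end HeatKernel

section ParametricIntegral

variable {X : Type*} [TopologicalSpace X] [SecondCountableTopology X] [MeasurableSpace X]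
  [OpensMeasurableSpace X] {μ : Measure X} [IsFiniteMeasure μ]

lemma integrable_of_continuous_of_isCompact_support {E : Type*} [NormedAddCommGroup E]
    (hμ : IsCompact μ.support) {f : X → E} (hf : Continuous f) : Integrable f μ := by
  obtain ⟨C, hC⟩ := hμ.exists_bound_of_continuousOn hf.continuousOn
  exact .of_bound hf.aestronglyMeasurable C (mem_of_superset μ.support_mem_ae hC)

lemma hasFDerivAt_integral_of_isCompact_support {H : Type*} [NormedAddCommGroup H]
    [NormedSpace ℝ H] [LocallyCompactSpace H] (hμ : IsCompact μ.support)
    {k : H → X → ℝ} {k' : H → X → H →L[ℝ] ℝ} {s : Set H} {p : H} (hs : s ∈ 𝓝 p)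
    (hk : ∀ q ∈ s, Continuous (k q))
    (hk' : ContinuousOn (fun q : H × X => k' q.1 q.2) (s ×ˢ univ))
    (hd : ∀ q ∈ s, ∀ z, HasFDerivAt (fun q => k q z) (k' q z) q) :
    Integrable (k' p) μ ∧ HasFDerivAt (fun q => ∫ z, k q z ∂μ) (∫ z, k' p z ∂μ) p := by
  have hk'p : Continuous (k' p) := by
    rw [← continuousOn_univ]
    exact hk'.comp (f := fun z => (p, z)) (by fun_prop) fun z _ => ⟨mem_of_mem_nhds hs, trivial⟩
  obtain ⟨L, ⟨hLp, hL⟩, hLs⟩ := (compact_basis_nhds p).mem_iff.1 hs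
  obtain ⟨C, hC⟩ := (hL.prod hμ).exists_bound_of_continuousOn
    (hk'.mono (prod_mono hLs (subset_univ _)))
  refine ⟨integrable_of_continuous_of_isCompact_support hμ hk'p,
    hasFDerivAt_integral_of_dominated_of_fderiv_le (bound := fun _ => C) hLp
      (eventually_of_mem hs fun q hq => (hk q hq).aestronglyMeasurable)
      (integrable_of_continuous_of_isCompact_support hμ (hk p (mem_of_mem_nhds hs)))
      hk'p.aestronglyMeasurable ?_ (integrable_const C)
      (.of_forall fun z q hq => hd q (hLs hq) z)⟩
  filter_upwards [μ.support_mem_ae] with z hz q hq using hC (q, z) ⟨hq, hz⟩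

end ParametricIntegral

section HeatFlow

variable {n : ℕ}

/-- The solution of the heat equation on `ℝⁿ` with initial datum the measure `φ μ`. The solution
with initial datum `μ` itself is `heatFlow μ 1`. -/
noncomputable def heatFlow (μ : Measure (𝔼 n)) (φ : 𝔼 n → ℝ) (y : 𝔼 n) (t : ℝ) : ℝ :=
  ∫ z, heatK n y z t * φ z ∂μ

/-- The mean of `φ` for the probability measure proportional to `K(y,z,t) μ(dz)`: the law at time
`0` of a Brownian motion started from `μ`, given that it is at `y` at time `t`. -/
noncomputable def heatMean (μ : Measure (𝔼 n)) (φ : 𝔼 n → ℝ) (y : 𝔼 n) (t : ℝ) : ℝ :=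
  heatFlow μ φ y t / heatFlow μ 1 y t

variable {μ : Measure (𝔼 n)} [IsFiniteMeasure μ] {φ : 𝔼 n → ℝ} {t : ℝ}

lemma integrable_heatK_mul (hμ : IsCompact μ.support) (hφ : Continuous φ) (y : 𝔼 n) (t : ℝ) :
    Integrable (fun z => heatK n y z t * φ z) μ :=
  integrable_of_continuous_of_isCompact_support hμ (by fun_prop)

lemma hasFDerivAt_heatFlow (hμ : IsCompact μ.support) (hφ : Continuous φ) (y : 𝔼 n) (t : ℝ) :
    Integrable (fun z => φ z • (heatK n y z t / (2 * t)) • innerSL ℝ (z - y)) μ ∧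
      HasFDerivAt (fun x => heatFlow μ φ x t)
        (∫ z, φ z • (heatK n y z t / (2 * t)) • innerSL ℝ (z - y) ∂μ) y :=
  hasFDerivAt_integral_of_isCompact_support hμ (s := univ)
    (k' := fun x z => φ z • (heatK n x z t / (2 * t)) • innerSL ℝ (z - x)) univ_mem
    (fun x _ => by fun_prop) (Continuous.continuousOn (by fun_prop))
    fun x _ z => (hasFDerivAt_heatK x z t).mul_const (φ z)

lemma differentiable_heatFlow (hμ : IsCompact μ.support) (hφ : Continuous φ) (t : ℝ) :
    Differentiable ℝ fun y => heatFlow μ φ y t :=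
  fun y => (hasFDerivAt_heatFlow hμ hφ y t).2.differentiableAt

lemma pdv_heatFlow (hμ : IsCompact μ.support) (hφ : Continuous φ) (j : Fin n) (y : 𝔼 n) (t : ℝ) :
    pdv j (fun x => heatFlow μ φ x t) y
      = (2 * t)⁻¹ * (heatFlow μ (fun z => z j * φ z) y t - y j * heatFlow μ φ y t) := by
  obtain ⟨hint, hderiv⟩ := hasFDerivAt_heatFlow hμ hφ y t
  rw [pdv, hderiv.fderiv, ContinuousLinearMap.integral_apply hint, heatFlow, heatFlow,
    ← integral_const_mul, ← integral_sub (integrable_heatK_mul hμ (by fun_prop) y t)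
      ((integrable_heatK_mul hμ hφ y t).const_mul _), ← integral_const_mul]
  refine integral_congr_ae (.of_forall fun z => ?_)
  simp [EuclideanSpace.inner_single_right]
  ring

lemma hess_heatFlow_self (hμ : IsCompact μ.support) (hφ : Continuous φ) (j : Fin n) (y : 𝔼 n)
    (t : ℝ) :
    hess j j (fun x => heatFlow μ φ x t) y
      = ∫ z, hess j j (fun x => heatK n x z t) y * φ z ∂μ := by
  have hzφ : Continuous fun z : 𝔼 n => z j * φ z := by fun_prop
  have I₀ := integrable_heatK_mul hμ hφ y t
  have I₁ := integrable_heatK_mul hμ hzφ y t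
  have I₂ := integrable_heatK_mul hμ (φ := fun z => z j * (z j * φ z)) (by fun_prop) y t
  have d₀ := differentiable_heatFlow hμ hφ t y
  have d₁ := differentiable_heatFlow hμ hzφ t y
  have dy : DifferentiableAt ℝ (fun x : 𝔼 n => x j) y := by fun_prop
  have hexpand (z : 𝔼 n) : hess j j (fun x => heatK n x z t) y * φ z
      = (4 * t ^ 2)⁻¹ * (heatK n y z t * (z j * (z j * φ z)))
        - y j / (2 * t ^ 2) * (heatK n y z t * (z j * φ z))
        + (y j ^ 2 / (4 * t ^ 2) - 1 / (2 * t)) * (heatK n y z t * φ z) := by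
    rw [hess_heatK_self]
    ring
  have I₂₁ : Integrable (fun z => (4 * t ^ 2)⁻¹ * (heatK n y z t * (z j * (z j * φ z)))
      - y j / (2 * t ^ 2) * (heatK n y z t * (z j * φ z))) μ :=
    (I₂.const_mul _).sub (I₁.const_mul _)
  simp only [hexpand]
  rw [integral_add I₂₁ (I₀.const_mul _),
    integral_sub (I₂.const_mul _) (I₁.const_mul _), integral_const_mul, integral_const_mul,
    integral_const_mul, hess, funext fun x => pdv_heatFlow hμ hφ j x t,
    pdv_const_mul j _ (d₁.fun_sub (dy.fun_mul d₀)), pdv_sub j d₁ (dy.fun_mul d₀), pdv_mul j dy d₀,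
    pdv_coord, pdv_heatFlow hμ hzφ, pdv_heatFlow hμ hφ]
  simp only [heatFlow, if_true]
  ring

lemma lap_heatFlow (hμ : IsCompact μ.support) (hφ : Continuous φ) (y : 𝔼 n) (t : ℝ) :
    lap (fun x => heatFlow μ φ x t) y = ∫ z, lap (fun x => heatK n x z t) y * φ z ∂μ := by
  have hint (j : Fin n) :
      Integrable (fun z => hess j j (fun x => heatK n x z t) y * φ z) μ := by
    simp only [hess_heatK_self]
    exact integrable_of_continuous_of_isCompact_support hμ (by fun_prop)
  simp only [lap, hess_heatFlow_self hμ hφ, Finset.sum_mul]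
  exact (integral_finsetSum _ fun j _ => hint j).symm

lemma hasDerivAt_heatFlow (hμ : IsCompact μ.support) (hφ : Continuous φ) (y : 𝔼 n) (ht : 0 < t) :
    HasDerivAt (fun s => heatFlow μ φ y s) (lap (fun x => heatFlow μ φ x t) y) t := by
  have hcont : ContinuousOn (fun q : ℝ × 𝔼 n => lap (fun x => heatK n x q.2 q.1) y * φ q.2)
      (Ioi 0 ×ˢ univ) := by
    have hK : ContinuousOn (fun q : ℝ × 𝔼 n => heatK n y q.2 q.1) (Ioi 0 ×ˢ univ) :=
      continuousOn_heatK.comp (f := fun q : ℝ × 𝔼 n => ((y, q.2), q.1)) (by fun_prop)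
        fun q hq => ⟨trivial, hq.1⟩
    simp only [lap, hess_heatK_self]
    fun_prop (disch := simp +contextual [ne_of_gt])
  obtain ⟨hint, hderiv⟩ := hasFDerivAt_integral_of_isCompact_support hμ
    (k := fun s z => heatK n y z s * φ z)
    (k' := fun s z => .toSpanSingleton ℝ (lap (fun x => heatK n x z s) y * φ z))
    (Ioi_mem_nhds ht) (fun s _ => by fun_prop)
    ((ContinuousLinearMap.toSpanSingletonCLE (𝕜 := ℝ)).continuous.comp_continuousOn hcont)
    fun s hs z => ((hasDerivAt_heatK y z hs).mul_const (φ z)).hasFDerivAt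
  refine hderiv.hasDerivAt.congr_deriv ?_
  rw [ContinuousLinearMap.integral_apply hint, lap_heatFlow hμ hφ]
  simp

end HeatFlow

section HeatMean

variable {n : ℕ}

variable {μ : Measure (𝔼 n)} [IsFiniteMeasure μ] [NeZero μ] {φ : 𝔼 n → ℝ} {t : ℝ}

lemma heatFlow_one_pos (hμ : IsCompact μ.support) (y : 𝔼 n) (ht : 0 < t) :
    0 < heatFlow μ 1 y t := by
  have hpos (z : 𝔼 n) : 0 < heatK n y z t * (1 : 𝔼 n → ℝ) z := by simpa using heatK_pos y z ht
  refine (integral_pos_iff_support_of_nonneg (fun z => (hpos z).le)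
    (integrable_heatK_mul hμ continuous_one y t)).2 ?_
  rw [Function.support_eq_univ fun z => (hpos z).ne']
  exact Measure.measure_univ_pos.2 (NeZero.ne μ)

lemma heatMean_mul_heatFlow_one (hμ : IsCompact μ.support) (φ : 𝔼 n → ℝ) (y : 𝔼 n) (ht : 0 < t) :
    heatMean μ φ y t * heatFlow μ 1 y t = heatFlow μ φ y t :=
  div_mul_cancel₀ _ (heatFlow_one_pos hμ y ht).ne'

lemma differentiable_heatMean (hμ : IsCompact μ.support) (hφ : Continuous φ) (ht : 0 < t) :
    Differentiable ℝ fun y => heatMean μ φ y t := by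
  simp only [heatMean, div_eq_mul_inv]
  exact (differentiable_heatFlow hμ hφ t).fun_mul
    ((differentiable_heatFlow hμ continuous_one t).inv fun y => (heatFlow_one_pos hμ y ht).ne')

lemma abs_heatMean_le (hμ : IsCompact μ.support) (hφ : Continuous φ) {C : ℝ}
    (hC : ∀ z ∈ μ.support, |φ z| ≤ C) (y : 𝔼 n) (ht : 0 < t) : |heatMean μ φ y t| ≤ C := by
  have hu := heatFlow_one_pos hμ y ht
  rw [heatMean, abs_div, abs_of_pos hu, div_le_iff₀ hu, heatFlow, heatFlow, ← integral_const_mul]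
  refine abs_integral_le_integral_abs.trans (integral_mono_ae
    (integrable_heatK_mul hμ hφ y t).abs
    ((integrable_heatK_mul hμ continuous_one y t).const_mul C) ?_)
  filter_upwards [μ.support_mem_ae] with z hz
  have hK := (heatK_pos y z ht).le
  rw [abs_mul, abs_of_nonneg hK, Pi.one_apply, mul_one, mul_comm C]
  gcongr
  exact hC z hz

lemma pdv_heatFlow_one (hμ : IsCompact μ.support) (j : Fin n) (y : 𝔼 n) (ht : 0 < t) :
    pdv j (fun x => heatFlow μ 1 x t) y
      = (2 * t)⁻¹ * (heatMean μ (fun z => z j) y t - y j) * heatFlow μ 1 y t := by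
  rw [pdv_heatFlow hμ continuous_one, mul_assoc, sub_mul, heatMean_mul_heatFlow_one hμ _ y ht]
  simp only [Pi.one_apply, mul_one]

lemma pdv_heatMean (hμ : IsCompact μ.support) (hφ : Continuous φ) (j : Fin n) (y : 𝔼 n)
    (ht : 0 < t) :
    pdv j (fun x => heatMean μ φ x t) y
      = (2 * t)⁻¹ * (heatMean μ (fun z => z j * φ z) y t
        - heatMean μ (fun z => z j) y t * heatMean μ φ y t) := by
  have hu := (heatFlow_one_pos hμ y ht).ne'
  unfold heatMean
  rw [pdv_div j (differentiable_heatFlow hμ hφ t y) (differentiable_heatFlow hμ continuous_one t y)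
    hu, pdv_heatFlow hμ hφ, pdv_heatFlow hμ continuous_one]
  simp only [Pi.one_apply, mul_one]
  field_simp
  ring

lemma pdv_log_heatFlow_one (hμ : IsCompact μ.support) (j : Fin n) (y : 𝔼 n) (ht : 0 < t) :
    pdv j (fun x => Real.log (heatFlow μ 1 x t)) y
      = (2 * t)⁻¹ * (heatMean μ (fun z => z j) y t - y j) := by
  have hu := (heatFlow_one_pos hμ y ht).ne'
  rw [pdv_log j (differentiable_heatFlow hμ continuous_one t y) hu, pdv_heatFlow_one hμ j y ht,
    mul_div_cancel_right₀ _ hu]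

lemma hess_log_heatFlow_one (hμ : IsCompact μ.support) (i j : Fin n) (y : 𝔼 n) (ht : 0 < t) :
    hess i j (fun x => Real.log (heatFlow μ 1 x t)) y + 1 / (2 * t) * (if i = j then 1 else 0)
      = (2 * t)⁻¹ * pdv i (fun x => heatMean μ (fun z => z j) x t) y := by
  have dm := differentiable_heatMean hμ (φ := fun z => z j) (by fun_prop) ht y
  have dy : DifferentiableAt ℝ (fun x : 𝔼 n => x j) y := by fun_prop
  rw [hess, funext (f := pdv j _) fun x => pdv_log_heatFlow_one hμ j x ht,
    pdv_const_mul i _ (dm.fun_sub dy), pdv_sub i dm dy, pdv_coord]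
  simp only [eq_comm (a := j)]
  ring

end HeatMean

section ExpGrowth

open Asymptotics

variable {n : ℕ}

/-- Exponential growth in space, uniformly in the time `t ∈ I`. Continuous functions of
this kind are integrable against every heat kernel. -/
def ExpBoundedOn (I : Set ℝ) (f : 𝔼 n → ℝ → ℝ) : Prop :=
  ∃ c : ℝ, (fun p : 𝔼 n × ℝ => f p.1 p.2) =O[𝓟 (univ ×ˢ I)] fun p => Real.exp (c * ‖p.1‖)

/-- The function `f` has continuous partial derivatives in space up to order `k`, which all grow at
most exponentially in space, uniformly in the time `t ∈ I`. -/
def ExpGrowthOn (I : Set ℝ) : ℕ → (𝔼 n → ℝ → ℝ) → Prop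
  | 0, f => (∀ t ∈ I, Continuous fun y => f y t) ∧ ExpBoundedOn I f
  | k + 1, f => (∀ t ∈ I, Differentiable ℝ fun y => f y t) ∧ ExpBoundedOn I f ∧
      ∀ j, ExpGrowthOn I k fun y t => pdv j (fun x => f x t) y

variable {I J : Set ℝ} {f g : 𝔼 n → ℝ → ℝ} {k : ℕ}

lemma expBoundedOn_iff :
    ExpBoundedOn I f ↔ ∃ c C : ℝ, ∀ y, ∀ t ∈ I, |f y t| ≤ C * Real.exp (c * ‖y‖) := by
  simp [ExpBoundedOn, isBigO_principal]

lemma ExpBoundedOn.add (hf : ExpBoundedOn I f) (hg : ExpBoundedOn I g) :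
    ExpBoundedOn I fun y t => f y t + g y t := by
  obtain ⟨c, hf⟩ := hf
  obtain ⟨d, hg⟩ := hg
  have weaken {b : ℝ} (hb : b ≤ max c d) :
      (fun p : 𝔼 n × ℝ => Real.exp (b * ‖p.1‖)) =O[𝓟 (univ ×ˢ I)]
        fun p => Real.exp (max c d * ‖p.1‖) :=
    .of_norm_le fun p => by simpa using mul_le_mul_of_nonneg_right hb (norm_nonneg p.1)
  exact ⟨max c d, (hf.trans (weaken (le_max_left c d))).add (hg.trans (weaken (le_max_right c d)))⟩

lemma ExpBoundedOn.mul (hf : ExpBoundedOn I f) (hg : ExpBoundedOn I g) :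
    ExpBoundedOn I fun y t => f y t * g y t := by
  obtain ⟨c, hf⟩ := hf
  obtain ⟨d, hg⟩ := hg
  exact ⟨c + d, by simpa only [add_mul, Real.exp_add] using hf.mul hg⟩

lemma ExpBoundedOn.congr (hf : ExpBoundedOn I f) (h : ∀ y, ∀ t ∈ I, f y t = g y t) :
    ExpBoundedOn I g := by
  obtain ⟨c, hf⟩ := hf
  exact ⟨c, hf.congr' (eventually_principal.2 fun p hp => h p.1 p.2 hp.2) .rfl⟩

lemma expBoundedOn_of_abs_le {C : ℝ} (h : ∀ y, ∀ t ∈ I, |f y t| ≤ C) : ExpBoundedOn I f :=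
  expBoundedOn_iff.2 ⟨0, C, fun y t ht => by simpa using h y t ht⟩

namespace ExpGrowthOn

lemma expBoundedOn : ∀ {k : ℕ}, ExpGrowthOn I k f → ExpBoundedOn I f
  | 0, hf => hf.2
  | _ + 1, hf => hf.2.1

protected lemma continuous : ∀ {k : ℕ}, ExpGrowthOn I k f → ∀ t ∈ I, Continuous fun y => f y t
  | 0, hf => hf.1
  | _ + 1, hf => fun t ht => (hf.1 t ht).continuous

protected lemma differentiable (hf : ExpGrowthOn I (k + 1) f) :
    ∀ t ∈ I, Differentiable ℝ fun y => f y t :=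
  hf.1

protected lemma pdv (hf : ExpGrowthOn I (k + 1) f) (j : Fin n) :
    ExpGrowthOn I k fun y t => pdv j (fun x => f x t) y :=
  hf.2.2 j

lemma of_succ (hf : ExpGrowthOn I (k + 1) f) : ExpGrowthOn I k f := by
  induction k generalizing f with
  | zero => exact ⟨hf.continuous, hf.expBoundedOn⟩
  | succ k ih => exact ⟨hf.differentiable, hf.expBoundedOn, fun j => ih (hf.pdv j)⟩

protected lemma mono (hf : ExpGrowthOn I k f) (hJ : J ⊆ I) : ExpGrowthOn J k f := by
  have hbdd {f : 𝔼 n → ℝ → ℝ} : ExpBoundedOn I f → ExpBoundedOn J f :=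
    fun ⟨c, hc⟩ => ⟨c, hc.mono (principal_mono.2 (prod_mono_right hJ))⟩
  induction k generalizing f with
  | zero => exact ⟨fun t ht => hf.1 t (hJ ht), hbdd hf.2⟩
  | succ k ih => exact ⟨fun t ht => hf.1 t (hJ ht), hbdd hf.2.1, fun j => ih (hf.pdv j)⟩

protected lemma congr (hf : ExpGrowthOn I k f) (h : ∀ y, ∀ t ∈ I, f y t = g y t) :
    ExpGrowthOn I k g := by
  have hfun {t : ℝ} (ht : t ∈ I) : (fun y => f y t) = fun y => g y t := funext fun y => h y t ht
  induction k generalizing f g with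
  | zero => exact ⟨fun t ht => hfun ht ▸ hf.1 t ht, hf.2.congr h⟩
  | succ k ih =>
    refine ⟨fun t ht => hfun ht ▸ hf.1 t ht, hf.2.1.congr h, fun j => ?_⟩
    exact ih (hf.pdv j) (fun y t ht => by rw [hfun ht]) fun ht => by rw [hfun ht]

protected lemma add (hf : ExpGrowthOn I k f) (hg : ExpGrowthOn I k g) :
    ExpGrowthOn I k fun y t => f y t + g y t := by
  induction k generalizing f g with
  | zero => exact ⟨fun t ht => (hf.1 t ht).add (hg.1 t ht), hf.2.add hg.2⟩
  | succ k ih =>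
    exact ⟨fun t ht => (hf.1 t ht).fun_add (hg.1 t ht), hf.2.1.add hg.2.1, fun j =>
      (ih (hf.pdv j) (hg.pdv j)).congr fun y t ht =>
        (pdv_add j (hf.1 t ht y) (hg.1 t ht y)).symm⟩

protected lemma mul (hf : ExpGrowthOn I k f) (hg : ExpGrowthOn I k g) :
    ExpGrowthOn I k fun y t => f y t * g y t := by
  induction k generalizing f g with
  | zero => exact ⟨fun t ht => (hf.1 t ht).mul (hg.1 t ht), hf.2.mul hg.2⟩
  | succ k ih =>
    exact ⟨fun t ht => (hf.1 t ht).fun_mul (hg.1 t ht), hf.2.1.mul hg.2.1, fun j =>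
      ((ih (hf.pdv j) hg.of_succ).add (ih hf.of_succ (hg.pdv j))).congr fun y t ht =>
        (pdv_mul j (hf.1 t ht y) (hg.1 t ht y)).symm⟩

lemma of_time {a : ℝ → ℝ} {C : ℝ} (ha : ∀ t ∈ I, |a t| ≤ C) :
    ExpGrowthOn I k fun (_ : 𝔼 n) t => a t := by
  induction k generalizing a C with
  | zero => exact ⟨fun _ _ => continuous_const, expBoundedOn_of_abs_le fun _ => ha⟩
  | succ k ih =>
    refine ⟨fun _ _ => differentiable_const _, expBoundedOn_of_abs_le fun _ => ha, fun j => ?_⟩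
    simp only [pdv_const]
    exact ih (a := fun _ => 0) (C := 0) (by simp)

lemma const (c : ℝ) : ExpGrowthOn I k fun (_ : 𝔼 n) _ => c :=
  of_time fun _ _ => le_rfl

protected lemma const_mul (c : ℝ) (hf : ExpGrowthOn I k f) : ExpGrowthOn I k fun y t => c * f y t :=
  (const c).mul hf

protected lemma sub (hf : ExpGrowthOn I k f) (hg : ExpGrowthOn I k g) :
    ExpGrowthOn I k fun y t => f y t - g y t := by
  simpa only [neg_one_mul, ← sub_eq_add_neg] using hf.add (hg.const_mul (-1))

protected lemma pow (hf : ExpGrowthOn I k f) (m : ℕ) : ExpGrowthOn I k fun y t => f y t ^ m := by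
  induction m with
  | zero => simpa only [pow_zero] using const 1
  | succ m ih => simpa only [pow_succ] using ih.mul hf

protected lemma sum {ι : Type*} (s : Finset ι) {f : ι → 𝔼 n → ℝ → ℝ}
    (hf : ∀ i ∈ s, ExpGrowthOn I k (f i)) :
    ExpGrowthOn I k fun y t => ∑ i ∈ s, f i y t := by
  induction s using Finset.cons_induction with
  | empty => simpa only [Finset.sum_empty] using const 0
  | cons i s hi ih =>
    simp only [Finset.sum_cons]
    exact (hf i (s.mem_cons_self i)).add (ih fun j hj => hf j (Finset.mem_cons_of_mem hj))

lemma coord (i : Fin n) : ExpGrowthOn I k fun (y : 𝔼 n) _ => y i := by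
  have hbdd : ExpBoundedOn I fun (y : 𝔼 n) _ => y i :=
    expBoundedOn_iff.2 ⟨1, 1, fun y _ _ => by
      have := Real.add_one_le_exp ‖y‖
      have := PiLp.norm_apply_le y i
      rw [Real.norm_eq_abs] at this
      simp only [one_mul]
      linarith⟩
  cases k with
  | zero => exact ⟨fun _ _ => by fun_prop, hbdd⟩
  | succ k =>
    refine ⟨fun _ _ => by fun_prop, hbdd, fun j => ?_⟩
    simp only [pdv_coord]
    exact const _

end ExpGrowthOn

end ExpGrowth

section DualHeatKernel

variable {n : ℕ}

lemma integrable_exp_neg_mul_sq_norm {b : ℝ} (hb : 0 < b) :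
    Integrable fun y : 𝔼 n => Real.exp (-b * ‖y‖ ^ 2) := by
  have h := GaussianFourier.integrable_cexp_neg_mul_sq_norm_add (V := 𝔼 n) (b := b)
    (by simpa using hb) 0 0
  refine h.norm.congr (.of_forall fun y => ?_)
  simp [Complex.norm_exp, ← Complex.ofReal_pow]

lemma integrable_exp_mul_norm_mul_gaussian (c : ℝ) (x : 𝔼 n) {β : ℝ} (hβ : 0 < β) :
    Integrable fun y : 𝔼 n => Real.exp (c * ‖y‖) * Real.exp (-‖y - x‖ ^ 2 / (4 * β)) := by
  have hgauss : Integrable fun y : 𝔼 n =>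
      Real.exp (|c| * ‖x‖ + 2 * β * c ^ 2) * Real.exp (-(8 * β)⁻¹ * ‖y - x‖ ^ 2) :=
    ((integrable_exp_neg_mul_sq_norm (by positivity)).comp_sub_right x).const_mul _
  refine hgauss.mono' (Continuous.aestronglyMeasurable (by fun_prop)) (.of_forall fun y => ?_)
  rw [Real.norm_of_nonneg (by positivity), ← Real.exp_add, ← Real.exp_add, Real.exp_le_exp]
  have hshift : c * ‖y‖ ≤ |c| * (‖x‖ + ‖y - x‖) := by
    have : ‖y‖ ≤ ‖x‖ + ‖y - x‖ := norm_le_insert' y x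
    gcongr
    exact le_abs_self c
  have hsq : |c| * ‖y - x‖ ≤ 2 * β * c ^ 2 + (8 * β)⁻¹ * ‖y - x‖ ^ 2 := by
    have : 0 ≤ (4 * β * |c| - ‖y - x‖) ^ 2 / (8 * β) := by positivity
    have hexpand : (4 * β * |c| - ‖y - x‖) ^ 2 / (8 * β)
        = 2 * β * |c| ^ 2 + (8 * β)⁻¹ * ‖y - x‖ ^ 2 - |c| * ‖y - x‖ := by
      field_simp
      ring
    rw [hexpand, sq_abs] at this
    linarith
  have hsplit : -‖y - x‖ ^ 2 / (4 * β) = -(2 * ((8 * β)⁻¹ * ‖y - x‖ ^ 2)) := by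
    field_simp
    ring
  rw [hsplit]
  linarith

variable {I : Set ℝ} {f g : 𝔼 n → ℝ → ℝ} {k : ℕ} {t τ : ℝ}

lemma ExpBoundedOn.exists_integrable_bound_mul_heatK (hf : ExpBoundedOn I f) (x : 𝔼 n) {α β : ℝ}
    (hα : 0 < α) (hαβ : α ≤ β) :
    ∃ B : 𝔼 n → ℝ, Integrable B ∧
      ∀ y, ∀ t ∈ I, ∀ τ ∈ Icc α β, ‖f y t * heatK n y x τ‖ ≤ B y := by
  obtain ⟨c, C, hC⟩ := expBoundedOn_iff.1 hf
  refine ⟨_, (integrable_exp_mul_norm_mul_gaussian c x (hα.trans_le hαβ)).const_mul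
    (C * (4 * π * α) ^ (-(n : ℝ) / 2)), fun y t ht τ hτ => ?_⟩
  have hK := (heatK_pos y x (hα.trans_le hτ.1)).le
  calc ‖f y t * heatK n y x τ‖ = |f y t| * heatK n y x τ := by
        rw [norm_mul, Real.norm_eq_abs, Real.norm_of_nonneg hK]
    _ ≤ C * Real.exp (c * ‖y‖)
          * ((4 * π * α) ^ (-(n : ℝ) / 2) * Real.exp (-‖y - x‖ ^ 2 / (4 * β))) :=
        mul_le_mul (hC y t ht) (heatK_le_mul_exp y x hα hτ) hK ((abs_nonneg _).trans (hC y t ht))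
    _ = _ := by ring

lemma ExpGrowthOn.integrable_mul_heatK (hf : ExpGrowthOn I k f) (ht : t ∈ I) (x : 𝔼 n)
    (hτ : 0 < τ) : Integrable fun y => f y t * heatK n y x τ := by
  obtain ⟨B, hB, hfB⟩ := hf.expBoundedOn.exists_integrable_bound_mul_heatK x hτ le_rfl
  have hcont := hf.continuous t ht
  exact hB.mono' (Continuous.aestronglyMeasurable (by fun_prop))
    (.of_forall fun y => hfB y t ht τ ⟨le_rfl, le_rfl⟩)

-- The factor of `heatK` in `hess_heatK_self`, at the time `σ s`.
lemma expGrowthOn_hessFactor (x : 𝔼 n) (j : Fin n) {σ : ℝ → ℝ} {C : ℝ}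
    (hσ : ∀ s ∈ I, |(σ s)⁻¹| ≤ C) :
    ExpGrowthOn I k fun y s => (x j - y j) ^ 2 / (4 * σ s ^ 2) - 1 / (2 * σ s) := by
  have hinv : ExpGrowthOn I k fun (_ : 𝔼 n) s => (σ s)⁻¹ := .of_time hσ
  have hlin : ExpGrowthOn I k fun (y : 𝔼 n) _ => x j - y j :=
    (ExpGrowthOn.const (x j)).sub (.coord j)
  refine ((((hlin.mul hinv).pow 2).const_mul 4⁻¹).sub (hinv.const_mul 2⁻¹)).congr
    fun y s _ => ?_
  simp only [div_eq_mul_inv, mul_inv, mul_pow, inv_pow]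
  ring

protected lemma ExpGrowthOn.lap (hf : ExpGrowthOn I (k + 2) f) :
    ExpGrowthOn I k fun y t => lap (fun x => f x t) y :=
  .sum _ fun j _ => (hf.pdv j).pdv j

lemma ExpGrowthOn.integrable_mul_hess_heatK (hf : ExpGrowthOn I k f) (ht : t ∈ I) (x : 𝔼 n)
    (hτ : 0 < τ) (j : Fin n) :
    Integrable fun y => f y t * hess j j (fun w => heatK n w x τ) y := by
  simpa only [hess_heatK_self, mul_assoc] using
    (hf.mul (expGrowthOn_hessFactor x j (σ := fun _ => τ)
      fun _ _ => le_rfl)).integrable_mul_heatK ht x hτ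

lemma ExpGrowthOn.integral_lap_mul_heatK (hf : ExpGrowthOn I 2 f) (ht : t ∈ I) (x : 𝔼 n)
    (hτ : 0 < τ) :
    ∫ y, lap (fun w => f w t) y * heatK n y x τ
      = ∫ y, f y t * lap (fun w => heatK n w x τ) y := by
  have hlin (j : Fin n) : ExpGrowthOn I 0 fun (y : 𝔼 n) _ => (x j - y j) / (2 * τ) := by
    simpa only [div_eq_inv_mul] using ((const (x j)).sub (.coord j)).const_mul (2 * τ)⁻¹
  have hpdv {h : 𝔼 n → ℝ → ℝ} (hh : ExpGrowthOn I 0 h) (j : Fin n) :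
      Integrable fun y => h y t * pdv j (fun w => heatK n w x τ) y := by
    simpa only [pdv_heatK, mul_assoc] using (hh.mul (hlin j)).integrable_mul_heatK ht x hτ
  refine integral_lap_mul (hf.differentiable t ht) (fun j => (hf.pdv j).differentiable t ht)
    (differentiable_heatK x τ) (fun j => ?_)
    (fun j => ((hf.pdv j).pdv j).integrable_mul_heatK ht x hτ)
    (fun j => (hf.pdv j).integrable_mul_heatK ht x hτ) (fun j => hpdv (hf.pdv j).of_succ j)
    (hpdv hf.of_succ.of_succ) (hf.integrable_mul_hess_heatK ht x hτ)
  rw [funext fun y => pdv_heatK j y x τ]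
  exact Differentiable.fun_mul (by fun_prop) (differentiable_heatK x τ)

lemma hasDerivAt_mul_heatK_sub {h : ℝ → ℝ} {h' t₀ : ℝ} (hh : HasDerivAt h h' t) (htt₀ : t < t₀)
    (y x : 𝔼 n) :
    HasDerivAt (fun s => h s * heatK n y x (t₀ - s))
      (h' * heatK n y x (t₀ - t) - h t * lap (fun w => heatK n w x (t₀ - t)) y) t := by
  refine (hh.mul ((hasDerivAt_heatK y x (sub_pos.2 htt₀)).comp t
    ((hasDerivAt_id t).const_sub t₀))).congr_deriv ?_
  simp only [Function.comp_apply]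
  ring

lemma ExpGrowthOn.hasDerivAt_integral_mul_heatK {f' : 𝔼 n → ℝ → ℝ} {t₀ : ℝ}
    (hf : ExpGrowthOn I 0 f) (hf' : ExpGrowthOn I 0 f') (hI : I ∈ 𝓝 t) (htt₀ : t < t₀) (x : 𝔼 n)
    (hff' : ∀ y, ∀ s ∈ I, HasDerivAt (f y) (f' y s) s) :
    HasDerivAt (fun s => ∫ y, f y s * heatK n y x (t₀ - s))
      (∫ y, (f' y t * heatK n y x (t₀ - t) - f y t * lap (fun w => heatK n w x (t₀ - t)) y)) t := by
  obtain ⟨δ, hδ, hδt⟩ : ∃ δ > 0, δ ≤ (t₀ - t) / 2 := ⟨(t₀ - t) / 2, by linarith, le_rfl⟩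
  let J := I ∩ Icc (t - δ) (t + δ)
  have hJ : J ∈ 𝓝 t := inter_mem hI (Icc_mem_nhds (by linarith) (by linarith))
  have hτ {s : ℝ} (hs : s ∈ J) : t₀ - s ∈ Icc δ (t₀ - t + δ) :=
    ⟨by linarith [hs.2.2], by linarith [hs.2.1]⟩
  have hinv (s : ℝ) (hs : s ∈ J) : |(t₀ - s)⁻¹| ≤ δ⁻¹ := by
    rw [abs_inv]
    exact inv_anti₀ hδ ((hτ hs).1.trans (le_abs_self _))
  let q (y : 𝔼 n) (s : ℝ) : ℝ := ∑ j, ((x j - y j) ^ 2 / (4 * (t₀ - s) ^ 2) - 1 / (2 * (t₀ - s)))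
  have hderiv : ExpGrowthOn J 0 fun y s => f' y s - f y s * q y s :=
    (hf'.mono inter_subset_left).sub
      ((hf.mono inter_subset_left).mul (.sum _ fun j _ => expGrowthOn_hessFactor x j hinv))
  have hfactor (y : 𝔼 n) (s : ℝ) :
      f' y s * heatK n y x (t₀ - s) - f y s * lap (fun w => heatK n w x (t₀ - s)) y
        = (f' y s - f y s * q y s) * heatK n y x (t₀ - s) := by
    rw [lap_heatK]
    ring
  obtain ⟨B, hB, hbound⟩ :=
    hderiv.expBoundedOn.exists_integrable_bound_mul_heatK x hδ (by linarith : δ ≤ t₀ - t + δ)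
  have ht : t ∈ I := mem_of_mem_nhds hI
  simp only [hfactor]
  refine (hasDerivAt_integral_of_dominated_loc_of_deriv_le hJ (bound := B)
    (F' := fun s y => (f' y s - f y s * q y s) * heatK n y x (t₀ - s))
    (eventually_of_mem hI fun s hs =>
      ((hf.continuous s hs).mul (by fun_prop)).aestronglyMeasurable)
    (hf.integrable_mul_heatK ht x (by linarith))
    (hderiv.integrable_mul_heatK (mem_of_mem_nhds hJ) x (by linarith)).aestronglyMeasurable
    (.of_forall fun y s hs => hbound y s hs _ (hτ hs)) hB (.of_forall fun y s hs => ?_)).2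
  rw [← hfactor]
  exact hasDerivAt_mul_heatK_sub (hff' y s hs.1) (by linarith [(hτ hs).1]) y x

theorem ExpGrowthOn.hasDerivAt_integral_mul_heatK_of_heatEquation {t₀ : ℝ}
    (hf : ExpGrowthOn I 2 f) (hg : ExpGrowthOn I 0 g) (hI : I ∈ 𝓝 t) (htt₀ : t < t₀) (x : 𝔼 n)
    (hfg : ∀ y, ∀ s ∈ I, HasDerivAt (f y) (lap (fun w => f w s) y + g y s) s) :
    HasDerivAt (fun s => ∫ y, f y s * heatK n y x (t₀ - s))
      (∫ y, g y t * heatK n y x (t₀ - t)) t := by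
  have ht : t ∈ I := mem_of_mem_nhds hI
  have hτ : 0 < t₀ - t := sub_pos.2 htt₀
  have hlap := hf.lap.integrable_mul_heatK ht x hτ
  have hgK := hg.integrable_mul_heatK ht x hτ
  have hlapK : Integrable fun y => f y t * lap (fun w => heatK n w x (t₀ - t)) y := by
    simp only [lap, Finset.mul_sum]
    exact integrable_finsetSum _ fun j _ => hf.integrable_mul_hess_heatK ht x hτ j
  refine (hf.of_succ.of_succ.hasDerivAt_integral_mul_heatK (hf.lap.add hg) hI htt₀ x
    hfg).congr_deriv ?_
  simp only [add_mul]
  rw [integral_sub (hlap.fun_add hgK) hlapK, integral_add hlap hgK,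
    hf.integral_lap_mul_heatK ht x hτ, add_sub_cancel_left]

end DualHeatKernel

section HeatVariance

variable {n : ℕ}

variable {μ : Measure (𝔼 n)} [IsFiniteMeasure μ] [NeZero μ] {φ : 𝔼 n → ℝ} {a t : ℝ} {k : ℕ}

lemma expGrowthOn_inv_two_mul (ha : 0 < a) :
    ExpGrowthOn (Ici a) k fun (_ : 𝔼 n) t => (2 * t)⁻¹ := by
  refine .of_time (C := (2 * a)⁻¹) fun t (ht : a ≤ t) => ?_
  rw [abs_of_nonneg (by have := ha.trans_le ht; positivity)]
  gcongr

lemma expGrowthOn_heatMean (hμ : IsCompact μ.support) (hφ : Continuous φ) (ha : 0 < a) :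
    ExpGrowthOn (Ici a) k (heatMean μ φ) := by
  have hbdd {φ : 𝔼 n → ℝ} (hφ : Continuous φ) : ExpBoundedOn (Ici a) (heatMean μ φ) := by
    obtain ⟨C, hC⟩ := hμ.exists_bound_of_continuousOn hφ.continuousOn
    exact expBoundedOn_of_abs_le fun y t ht => abs_heatMean_le hμ hφ hC y (ha.trans_le ht)
  have hdiff {φ : 𝔼 n → ℝ} (hφ : Continuous φ) (t : ℝ) (ht : t ∈ Ici a) :
      Differentiable ℝ fun y => heatMean μ φ y t :=
    differentiable_heatMean hμ hφ (ha.trans_le ht)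
  induction k generalizing φ with
  | zero => exact ⟨fun t ht => (hdiff hφ t ht).continuous, hbdd hφ⟩
  | succ k ih =>
    refine ⟨hdiff hφ, hbdd hφ, fun j => ?_⟩
    have hz : Continuous fun z : 𝔼 n => z j := by fun_prop
    exact ((expGrowthOn_inv_two_mul ha).mul ((ih (hz.mul hφ)).sub ((ih hz).mul (ih hφ)))).congr
      fun y t ht => (pdv_heatMean hμ hφ j y (ha.trans_le ht)).symm

lemma expGrowthOn_heatFlow_one (hμ : IsCompact μ.support) (ha : 0 < a) :
    ExpGrowthOn (Ici a) k (heatFlow μ 1) := by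
  have hbdd : ExpBoundedOn (Ici a) (heatFlow μ 1) := by
    refine expBoundedOn_of_abs_le (C := (4 * π * a) ^ (-(n : ℝ) / 2) * μ.real univ) fun y t ht => ?_
    refine norm_integral_le_of_norm_le_const (f := fun z => heatK n y z t * (1 : 𝔼 n → ℝ) z)
      (.of_forall fun z => ?_)
    rw [Pi.one_apply, mul_one, Real.norm_of_nonneg (heatK_pos y z (ha.trans_le ht)).le]
    exact heatK_le y z ha ht
  have hdiff (t : ℝ) : Differentiable ℝ fun y => heatFlow μ 1 y t :=
    differentiable_heatFlow hμ continuous_one t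
  induction k with
  | zero => exact ⟨fun t _ => (hdiff t).continuous, hbdd⟩
  | succ k ih =>
    refine ⟨fun t _ => hdiff t, hbdd, fun j => ?_⟩
    have hmean : ExpGrowthOn (Ici a) k (heatMean μ fun z => z j) :=
      expGrowthOn_heatMean hμ (by fun_prop) ha
    exact (((expGrowthOn_inv_two_mul ha).mul (hmean.sub (.coord j))).mul ih).congr
      fun y t ht => (pdv_heatFlow_one hμ j y (ha.trans_le ht)).symm

lemma hasDerivAt_heatMean_sq_mul (hμ : IsCompact μ.support) (hφ : Continuous φ) (y : 𝔼 n)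
    (ht : 0 < t) :
    HasDerivAt (fun s => heatMean μ φ y s ^ 2 * heatFlow μ 1 y s)
      (lap (fun x => heatMean μ φ x t ^ 2 * heatFlow μ 1 x t) y
        - 2 * heatFlow μ 1 y t * ∑ j, pdv j (fun x => heatMean μ φ x t) y ^ 2) t := by
  have hu := (heatFlow_one_pos hμ y ht).ne'
  have hmean : ExpGrowthOn (Ici t) 2 (heatMean μ φ) := expGrowthOn_heatMean hμ hφ ht
  have hflow : ExpGrowthOn (Ici t) 2 (heatFlow μ 1) := expGrowthOn_heatFlow_one hμ ht
  have hquot : HasDerivAt (fun s => heatFlow μ φ y s ^ 2 / heatFlow μ 1 y s)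
      (2 * heatMean μ φ y t * lap (fun x => heatFlow μ φ x t) y
        - heatMean μ φ y t ^ 2 * lap (fun x => heatFlow μ 1 x t) y) t := by
    refine (((hasDerivAt_heatFlow hμ hφ y ht).pow 2).div
      (hasDerivAt_heatFlow hμ continuous_one y ht) hu).congr_deriv ?_
    simp only [heatMean, Pi.pow_apply]
    field_simp
    ring
  have hlap := lap_sq_mul (y := y) (hmean.differentiable t self_mem_Ici)
    (fun j => (hmean.pdv j).differentiable t self_mem_Ici) (hflow.differentiable t self_mem_Ici)
    fun j => (hflow.pdv j).differentiable t self_mem_Ici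
  simp only [heatMean_mul_heatFlow_one hμ φ _ ht] at hlap
  rw [hlap, add_sub_cancel_right]
  refine hquot.congr_of_eventuallyEq ?_
  filter_upwards [Ioi_mem_nhds ht] with s hs
  rw [← heatMean_mul_heatFlow_one hμ φ y hs]
  have := (heatFlow_one_pos hμ y hs).ne'
  field_simp

/-- The variance of `φ` for the probability measure proportional to `K(y,z,t) μ(dz)`. -/
noncomputable def heatVar (μ : Measure (𝔼 n)) (φ : 𝔼 n → ℝ) (y : 𝔼 n) (t : ℝ) : ℝ :=
  heatMean μ (fun z => φ z ^ 2) y t - heatMean μ φ y t ^ 2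

lemma expGrowthOn_heatVar_mul (hμ : IsCompact μ.support) (hφ : Continuous φ) (ha : 0 < a) :
    ExpGrowthOn (Ici a) k fun y t => heatVar μ φ y t * heatFlow μ 1 y t :=
  ((expGrowthOn_heatMean hμ (hφ.pow 2) ha).sub ((expGrowthOn_heatMean hμ hφ ha).pow 2)).mul
    (expGrowthOn_heatFlow_one hμ ha)

lemma heatVar_mul_heatFlow_one (hμ : IsCompact μ.support) (y : 𝔼 n) (ht : 0 < t) :
    heatVar μ φ y t * heatFlow μ 1 y t
      = heatFlow μ (fun z => φ z ^ 2) y t - heatMean μ φ y t ^ 2 * heatFlow μ 1 y t := by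
  rw [heatVar, sub_mul, heatMean_mul_heatFlow_one hμ _ y ht]

lemma hasDerivAt_heatVar_mul (hμ : IsCompact μ.support) (hφ : Continuous φ) (y : 𝔼 n)
    (ht : 0 < t) :
    HasDerivAt (fun s => heatVar μ φ y s * heatFlow μ 1 y s)
      (lap (fun x => heatVar μ φ x t * heatFlow μ 1 x t) y
        + 2 * heatFlow μ 1 y t * ∑ j, pdv j (fun x => heatMean μ φ x t) y ^ 2) t := by
  have hsq : ExpGrowthOn (Ici t) 2 (heatFlow μ fun z => φ z ^ 2) :=
    ((expGrowthOn_heatMean hμ (hφ.pow 2) ht).mul (expGrowthOn_heatFlow_one hμ ht)).congr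
      fun y s hs => heatMean_mul_heatFlow_one hμ _ y (ht.trans_le hs)
  have hmean : ExpGrowthOn (Ici t) 2 fun y s => heatMean μ φ y s ^ 2 * heatFlow μ 1 y s :=
    ((expGrowthOn_heatMean hμ hφ ht).pow 2).mul (expGrowthOn_heatFlow_one hμ ht)
  have hφ2 : Continuous fun z => φ z ^ 2 := hφ.pow 2
  have hderiv := (hasDerivAt_heatFlow hμ hφ2 y ht).sub (hasDerivAt_heatMean_sq_mul hμ hφ y ht)
  have hlap := lap_sub (y := y) (hsq.differentiable t self_mem_Ici)
    (fun j => (hsq.pdv j).differentiable t self_mem_Ici) (hmean.differentiable t self_mem_Ici)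
    fun j => (hmean.pdv j).differentiable t self_mem_Ici
  simp only [heatVar_mul_heatFlow_one hμ _ ht, hlap]
  refine (hderiv.congr_of_eventuallyEq ?_).congr_deriv (by ring)
  filter_upwards [Ioi_mem_nhds ht] with s hs using heatVar_mul_heatFlow_one hμ y hs

lemma lap_log_heatFlow_one (hμ : IsCompact μ.support) (y : 𝔼 n) (ht : 0 < t) :
    lap (fun x => Real.log (heatFlow μ 1 x t)) y + n / (2 * t)
      = (4 * t ^ 2)⁻¹ * ∑ i, heatVar μ (fun z => z i) y t := by
  have hdiag (i : Fin n) : hess i i (fun x => Real.log (heatFlow μ 1 x t)) y + 1 / (2 * t)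
      = (4 * t ^ 2)⁻¹ * heatVar μ (fun z => z i) y t := by
    have h := hess_log_heatFlow_one hμ i i y ht
    rw [if_pos rfl, mul_one, pdv_heatMean hμ (by fun_prop) i y ht] at h
    simp only [h, heatVar, sq, mul_inv]
    ring
  rw [Finset.mul_sum, ← Finset.sum_congr rfl fun i _ => hdiag i, Finset.sum_add_distrib, lap]
  simp [div_eq_mul_inv]

end HeatVariance

section LiYau

variable {n : ℕ}

variable {μ : Measure (𝔼 n)} [IsFiniteMeasure μ] [NeZero μ] {t t₀ : ℝ}

lemma hasDerivAt_integral_heatVar_mul (hμ : IsCompact μ.support) (ht : 0 < t) (htt₀ : t < t₀)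
    (x₀ : 𝔼 n) :
    HasDerivAt
      (fun s => ∫ y, (∑ i, heatVar μ (fun z => z i) y s * heatFlow μ 1 y s) * heatK n y x₀ (t₀ - s))
      (∫ y, (∑ i, 2 * heatFlow μ 1 y t * ∑ j, pdv j (fun x => heatMean μ (fun z => z i) x t) y ^ 2)
        * heatK n y x₀ (t₀ - t)) t := by
  have hz (i : Fin n) : Continuous fun z : 𝔼 n => z i := by fun_prop
  have ha : 0 < t / 2 := by positivity
  have hvar (i : Fin n) :
      ExpGrowthOn (Ici (t / 2)) 2 fun y s => heatVar μ (fun z => z i) y s * heatFlow μ 1 y s :=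
    expGrowthOn_heatVar_mul hμ (hz i) ha
  have hmean (i : Fin n) : ExpGrowthOn (Ici (t / 2)) 1 (heatMean μ fun z => z i) :=
    expGrowthOn_heatMean hμ (hz i) ha
  refine ExpGrowthOn.hasDerivAt_integral_mul_heatK_of_heatEquation (I := Ici (t / 2))
    (.sum _ fun i _ => hvar i)
    (.sum _ fun i _ => ((expGrowthOn_heatFlow_one hμ ha).const_mul 2).mul
      (.sum _ fun j _ => ((hmean i).pdv j).pow 2))
    (Ici_mem_nhds (by linarith)) htt₀ x₀ fun y s hs => ?_
  rw [lap_sum _ (fun i _ => (hvar i).differentiable s hs)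
    fun i _ j => ((hvar i).pdv j).differentiable s hs, ← Finset.sum_add_distrib]
  exact HasDerivAt.fun_sum fun i _ => hasDerivAt_heatVar_mul hμ (hz i) y (ha.trans_le hs)

lemma sq_mul_heatFlow_mul_lap_log (hμ : IsCompact μ.support) (y : 𝔼 n) (ht : 0 < t) :
    t ^ 2 * heatFlow μ 1 y t * (lap (fun x => Real.log (heatFlow μ 1 x t)) y + n / (2 * t))
      = 4⁻¹ * ∑ i, heatVar μ (fun z => z i) y t * heatFlow μ 1 y t := by
  rw [lap_log_heatFlow_one hμ y ht, ← Finset.sum_mul]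
  field_simp

lemma sum_hess_log_heatFlow_sq (hμ : IsCompact μ.support) (y : 𝔼 n) (ht : 0 < t) :
    2 * t ^ 2 * ∑ i, ∑ j, (hess i j (fun x => Real.log (heatFlow μ 1 x t)) y
        + 1 / (2 * t) * (if i = j then 1 else 0)) ^ 2
      = 2⁻¹ * ∑ i, ∑ j, pdv j (fun x => heatMean μ (fun z => z i) x t) y ^ 2 := by
  simp only [hess_log_heatFlow_one hμ _ _ y ht, mul_pow, ← Finset.mul_sum]
  rw [Finset.sum_comm]
  field_simp

theorem hasDerivAt_integral_liYau (hμ : IsCompact μ.support) (ht : 0 < t) (htt₀ : t < t₀)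
    (x₀ : 𝔼 n) :
    HasDerivAt
      (fun s => ∫ y, s ^ 2 * heatFlow μ 1 y s
        * (lap (fun z => Real.log (heatFlow μ 1 z s)) y + n / (2 * s)) * heatK n y x₀ (t₀ - s))
      (2 * t ^ 2 * ∫ y, (∑ i, ∑ j, (hess i j (fun z => Real.log (heatFlow μ 1 z t)) y
          + 1 / (2 * t) * (if i = j then 1 else 0)) ^ 2)
        * heatFlow μ 1 y t * heatK n y x₀ (t₀ - t)) t := by
  refine (((hasDerivAt_integral_heatVar_mul hμ ht htt₀ x₀).const_mul 4⁻¹).congr_of_eventuallyEq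
    ?_).congr_deriv ?_
  · filter_upwards [Ioi_mem_nhds ht] with s hs
    simp only [sq_mul_heatFlow_mul_lap_log hμ _ hs, mul_assoc, integral_const_mul]
  · rw [← integral_const_mul, ← integral_const_mul]
    refine integral_congr_ae (.of_forall fun y => ?_)
    simp only [← mul_assoc, sum_hess_log_heatFlow_sq hμ y ht, ← Finset.mul_sum]
    ring

end LiYau

section WithDensity

variable {X : Type*} [TopologicalSpace X] [MeasurableSpace X] [BorelSpace X] {ν : Measure X}
  {ρ : X → ℝ≥0∞}

lemma isCompact_support_withDensity (hρ : HasCompactSupport ρ) :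
    IsCompact (ν.withDensity ρ).support := by
  refine hρ.of_isClosed_subset Measure.isClosed_support
    (Measure.support_subset_of_isClosed (isClosed_tsupport ρ) ?_)
  rw [mem_ae_iff, withDensity_apply _ (isClosed_tsupport ρ).isOpen_compl.measurableSet]
  exact setLIntegral_eq_zero (isClosed_tsupport ρ).isOpen_compl.measurableSet
    fun z hz => image_eq_zero_of_notMem_tsupport hz

lemma neZero_withDensity [ν.IsOpenPosMeasure] (hρ : Continuous ρ) (hne : ρ ≠ 0) :
    NeZero (ν.withDensity ρ) :=
  ⟨fun h => hne (hρ.ae_eq_iff_eq ν continuous_zero |>.1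
    ((withDensity_eq_zero_iff hρ.measurable.aemeasurable).1 h))⟩

lemma exists_measure_integral_eq [ν.IsOpenPosMeasure] [IsFiniteMeasureOnCompacts ν] {f : X → ℝ}
    (hf : Continuous f) (hsupp : HasCompactSupport f) (hnn : ∀ z, 0 ≤ f z) (hne : ∃ z, f z ≠ 0) :
    ∃ μ : Measure X, IsFiniteMeasure μ ∧ NeZero μ ∧ IsCompact μ.support ∧
      ∀ g : X → ℝ, ∫ z, g z ∂μ = ∫ z, g z * f z ∂ν := by
  have hρ : Continuous fun z => ENNReal.ofReal (f z) := ENNReal.continuous_ofReal.comp hf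
  have hρ_ne : (fun z => ENNReal.ofReal (f z)) ≠ 0 := by
    obtain ⟨z, hz⟩ := hne
    exact fun h => hz (le_antisymm (ENNReal.ofReal_eq_zero.1 (congrFun h z)) (hnn z))
  refine ⟨ν.withDensity fun z => ENNReal.ofReal (f z),
    isFiniteMeasure_withDensity_ofReal (hf.integrable_of_hasCompactSupport hsupp).2,
    neZero_withDensity hρ hρ_ne,
    isCompact_support_withDensity (hsupp.comp_left ENNReal.ofReal_zero), fun g => ?_⟩
  rw [integral_withDensity_eq_integral_toReal_smul hρ.measurable (by simp)]
  simp only [ENNReal.toReal_ofReal (hnn _), smul_eq_mul, mul_comm]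

end WithDensity

theorem stmt8_general (n : ℕ) (μ : Measure (𝔼 n)) [IsFiniteMeasure μ] [NeZero μ]
    (hμ : IsCompact μ.support)
    (u : 𝔼 n → ℝ → ℝ) (hu : ∀ y t, u y t = ∫ z, heatK n y z t ∂μ)
    (x₀ : 𝔼 n) (t₀ : ℝ) (hatH : 𝔼 n → ℝ → ℝ)
    (hhatH : ∀ y t, hatH y t
      = (4 * π * (t₀ - t)) ^ (-(n : ℝ) / 2)
          * Real.exp (-‖x₀ - y‖ ^ 2 / (4 * (t₀ - t))))
    (F D : ℝ → ℝ)
    (hF : ∀ t, F t = ∫ y, t ^ 2 * u y t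
      * (lap (fun z => Real.log (u z t)) y + n / (2 * t)) * hatH y t)
    (hD : ∀ t, D t = 2 * t ^ 2 * ∫ y,
      (∑ i, ∑ j, (hess i j (fun z => Real.log (u z t)) y
          + (1 / (2 * t)) * (if i = j then 1 else 0)) ^ 2)
        * u y t * hatH y t) :
    (∀ t ∈ Set.Ioo (0 : ℝ) t₀, HasDerivAt F (D t) t ∧ 0 ≤ D t)
    ∧ MonotoneOn F (Set.Ioo (0 : ℝ) t₀) := by
  obtain rfl : u = heatFlow μ 1 := by
    funext y t
    simp [hu, heatFlow]
  obtain rfl : hatH = fun y t => heatK n y x₀ (t₀ - t) := by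
    funext y t
    rw [heatK_comm, heatK, hhatH]
  have hderiv (t : ℝ) (ht : t ∈ Ioo 0 t₀) : HasDerivAt F (D t) t := by
    rw [funext hF, hD]
    exact hasDerivAt_integral_liYau hμ ht.1 ht.2 x₀
  have hnonneg (t : ℝ) (ht : t ∈ Ioo 0 t₀) : 0 ≤ D t := by
    rw [hD]
    refine mul_nonneg (by positivity) (integral_nonneg fun y => ?_)
    have := heatFlow_one_pos hμ y ht.1
    have := heatK_pos y x₀ (sub_pos.2 ht.2)
    positivity
  refine ⟨fun t ht => ⟨hderiv t ht, hnonneg t ht⟩, monotoneOn_of_deriv_nonneg (convex_Ioo 0 t₀)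
    (fun t ht => (hderiv t ht).continuousAt.continuousWithinAt) ?_ ?_⟩ <;> rw [interior_Ioo]
  · exact fun t ht => (hderiv t ht).differentiableAt.differentiableWithinAt
  · exact fun t ht => (hderiv t ht).deriv ▸ hnonneg t ht

/-- Flat-space Proposition 7 of the paper: monotonicity of the weighted
Li–Yau quantity `t ↦ ∫ t² u (Δ log u + n/(2t)) Ĥ dy`, whose derivative equals
`2t² ∫ ‖∇² log u + I/(2t)‖²_F u Ĥ dy ≥ 0`. -/
theorem stmt8 (n : ℕ) (hn : 1 ≤ n)
    (u₀ : EuclideanSpace ℝ (Fin n) → ℝ) (hc : Continuous u₀)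
    (hsupp : HasCompactSupport u₀) (hnn : ∀ z, 0 ≤ u₀ z) (hne : ∃ z, u₀ z ≠ 0)
    (u : EuclideanSpace ℝ (Fin n) → ℝ → ℝ)
    (hu : ∀ y t, u y t = ∫ z, heatK n y z t * u₀ z)
    (x₀ : EuclideanSpace ℝ (Fin n)) (t₀ : ℝ) (ht₀ : 0 < t₀)
    (hatH : EuclideanSpace ℝ (Fin n) → ℝ → ℝ)
    (hhatH : ∀ y t, hatH y t
      = (4 * π * (t₀ - t)) ^ (-(n : ℝ) / 2)
          * Real.exp (-‖x₀ - y‖ ^ 2 / (4 * (t₀ - t))))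
    (F D : ℝ → ℝ)
    (hF : ∀ t, F t = ∫ y, t ^ 2 * u y t
      * (lap (fun z => Real.log (u z t)) y + n / (2 * t)) * hatH y t)
    (hD : ∀ t, D t = 2 * t ^ 2 * ∫ y,
      (∑ i, ∑ j, (hess i j (fun z => Real.log (u z t)) y
          + (1 / (2 * t)) * (if i = j then 1 else 0)) ^ 2)
        * u y t * hatH y t) :
    (∀ t ∈ Set.Ioo (0 : ℝ) t₀, HasDerivAt F (D t) t ∧ 0 ≤ D t)
    ∧ MonotoneOn F (Set.Ioo (0 : ℝ) t₀) := by
  obtain ⟨μ, _, _, hμ, hμ_int⟩ := exists_measure_integral_eq (ν := volume) hc hsupp hnn hne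
  exact stmt8_general n μ hμ u (fun y t => (hu y t).trans (hμ_int _).symm) x₀ t₀ hatH hhatH
    F D hF hD
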